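/- arXiv:1911.00794 — 6 statements merged into one kernel-verified Lean document; each statement's English description precedes it below -/
import Mathlib

section
/- Let k, n ≥ 1, let g be a 2k×2k real matrix, let M be an invertible n×n real matrix, let j : Fin 2k → Fin n and l : Fin n → Fin 2k, let V be the 2k×n matrix with i-th row equal to the j(i)-th row of M, and let G be the n×2k matrix with a-th row equal to the l(a)-th row of g. Then det [[g, −V], [G, M]] = det(M) · det(g′), where g′ is the 2k×2k matrix whose i-th row is g i + g (l(j(i))), i.e. g′ is obtained from g by adding to each row i the row l(j(i)) of g. -/
/-!
Each row of `V` is a row of `M`, so adding the lower block rows selected by `j` to the upper block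
rows clears the block `-V` and turns `g` into `g′`. What is left is block lower triangular.
-/

section

variable {R m n : Type*} [CommRing R] [Fintype m] [Fintype n] [DecidableEq m] [DecidableEq n]

theorem det_fromBlocks_neg_mul (A : Matrix m m R) (P : Matrix m n R) (C : Matrix n m R)
    (D : Matrix n n R) :
    (Matrix.fromBlocks A (-(P * D)) C D).det = D.det * (A + P * C).det := by
  have clear_upper_right : Matrix.fromBlocks 1 P 0 1 * Matrix.fromBlocks A (-(P * D)) C D =
      Matrix.fromBlocks (A + P * C) 0 C D := by
    simp [Matrix.fromBlocks_multiply]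
  have det_unitriangular : (Matrix.fromBlocks 1 P 0 1 : Matrix (m ⊕ n) (m ⊕ n) R).det = 1 := by
    simp
  calc
    (Matrix.fromBlocks A (-(P * D)) C D).det
        = (Matrix.fromBlocks 1 P 0 1 * Matrix.fromBlocks A (-(P * D)) C D).det := by
      rw [Matrix.det_mul, det_unitriangular, one_mul]
    _ = D.det * (A + P * C).det := by
      rw [clear_upper_right, Matrix.det_fromBlocks_zero₁₂, mul_comm]

theorem bordered_block_det_general (g : Matrix m m R) (M : Matrix n n R) (j : m → n)
    (G : Matrix n m R) :
    (Matrix.fromBlocks g (-M.submatrix j id) G M).det = M.det * (g + G.submatrix j id).det := by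
  have select_rows_G : (1 : Matrix n n R).submatrix j id * G = G.submatrix j id :=
    Matrix.one_submatrix_mul j (Equiv.refl n) G
  have select_rows_M : (1 : Matrix n n R).submatrix j id * M = M.submatrix j id :=
    Matrix.one_submatrix_mul j (Equiv.refl n) M
  rw [← select_rows_M, ← select_rows_G, det_fromBlocks_neg_mul]

end

/-- With `V` the 2k×n matrix whose i-th row is row `j i` of an invertible
matrix `M`, and `G` the n×2k matrix whose a-th row is row `l a` of `g`, the
determinant of the block matrix `[[g, −V], [G, M]]` equals `det M · det g′`,
where `g′` is obtained from `g` by adding row `l (j i)` of `g` to each row `i`. -/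
theorem bordered_block_det (k n : ℕ) (hk : 1 ≤ k) (hn : 1 ≤ n)
    (g : Matrix (Fin (2 * k)) (Fin (2 * k)) ℝ)
    (M : Matrix (Fin n) (Fin n) ℝ) (hM : IsUnit M.det)
    (j : Fin (2 * k) → Fin n) (l : Fin n → Fin (2 * k))
    (V : Matrix (Fin (2 * k)) (Fin n) ℝ) (hV : ∀ i, V i = M (j i))
    (G : Matrix (Fin n) (Fin (2 * k)) ℝ) (hG : ∀ a, G a = g (l a)) :
    (Matrix.fromBlocks g (-V) G M).det =
      M.det * (Matrix.of fun i w => g i w + g (l (j i)) w).det := by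
  obtain ⟨rfl, rfl⟩ : V = M.submatrix j id ∧ G = g.submatrix l id := ⟨funext hV, funext hG⟩
  exact bordered_block_det_general g M j (g.submatrix l id)
end

section
/- Let k ≥ 1, let M and N be k×k real matrices, let a, b, r ∈ ℝ^k, and let B be the (2k+1)×(2k+1) bordered block matrix B = [[M, M, −a], [−N, N, −b], [rᵀ, rᵀ, 1]]. Then det B = 2^k · det(M + a·rᵀ) · det(N), where a·rᵀ is the k×k outer-product matrix with (i,l) entry a_i·r_l. -/
/-!
Taking the Schur complement of the corner entry `1` adds `a rᵀ` to both blocks of the first row and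
`b rᵀ` to both blocks of the second. Subtracting the first block column from the second then leaves
a block triangular matrix, and in its lower right block the two copies of `b rᵀ` cancel.
-/

section BorderedDet

open Matrix

variable {R m n p : Type*}

lemma fromRows_replicateCol (u : m → R) (v : n → R) :
    fromRows (replicateCol p u) (replicateCol p v) = replicateCol p (Sum.elim u v) := by
  ext (_ | _) _ <;> rfl

lemma fromCols_replicateRow (u : m → R) (v : n → R) :
    fromCols (replicateRow p u) (replicateRow p v) = replicateRow p (Sum.elim u v) := by
  ext _ (_ | _) <;> rfl

variable [CommRing R] [Fintype m] [DecidableEq m] [Fintype n] [DecidableEq n] [Fintype p]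
  [DecidableEq p]

lemma det_fromBlocks_mul_right (A : Matrix m m R) (X : Matrix m n R) (C : Matrix n m R)
    (D : Matrix n n R) :
    (fromBlocks A (A * X) C D).det = A.det * (D - C * X).det := by
  have column_operation :
      fromBlocks A (A * X) C D = fromBlocks A 0 C (D - C * X) * fromBlocks 1 X 0 1 := by
    simp [fromBlocks_multiply]
  rw [column_operation, det_mul, det_fromBlocks_zero₁₂, det_fromBlocks_zero₂₁]
  simp only [det_one, mul_one]

lemma det_fromBlocks_fromBlocks_mul_right_one (A : Matrix m m R) (X : Matrix m n R)
    (C : Matrix n m R) (D : Matrix n n R) (U : Matrix m p R) (V : Matrix n p R) (W : Matrix p m R) :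
    (fromBlocks (fromBlocks A (A * X) C D) (fromRows U V) (fromCols W (W * X)) 1).det =
      (A - U * W).det * (D - C * X).det := by
  have schur_complement :
      fromBlocks A (A * X) C D - fromRows U V * fromCols W (W * X) =
        fromBlocks (A - U * W) ((A - U * W) * X) (C - V * W) (D - V * W * X) := by
    rw [fromRows_mul_fromCols, sub_eq_add_neg, fromBlocks_neg, fromBlocks_add]
    simp only [← sub_eq_add_neg, Matrix.sub_mul, Matrix.mul_assoc]
  have border_cancels : D - V * W * X - (C - V * W) * X = D - C * X := by
    rw [Matrix.sub_mul, sub_sub_sub_cancel_right]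
  rw [det_fromBlocks_one₂₂, schur_complement, det_fromBlocks_mul_right, border_cancels]

theorem bordered_det_plus_general (M N : Matrix n n R) (A B : Matrix n p R) (W : Matrix p n R) :
    (fromBlocks (fromBlocks M M (-N) N) (fromRows A B) (fromCols W W) 1).det =
      2 ^ Fintype.card n * (M - A * W).det * N.det :=
  calc
    _ = (M - A * W).det * (N - -N).det := by
      simpa only [Matrix.mul_one] using det_fromBlocks_fromBlocks_mul_right_one M 1 (-N) N A B W
    _ = (M - A * W).det * (2 ^ Fintype.card n * N.det) := by
      rw [sub_neg_eq_add, ← two_smul R, det_smul]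
    _ = 2 ^ Fintype.card n * (M - A * W).det * N.det := by ring

end BorderedDet

/-- The bordered (2k+1)×(2k+1) matrix `[[M, M, −a], [−N, N, −b], [rᵀ, rᵀ, 1]]`
has determinant `2^k · det(M + a·rᵀ) · det N`. -/
theorem bordered_det_plus (k : ℕ) (hk : 1 ≤ k) (M N : Matrix (Fin k) (Fin k) ℝ)
    (a b r : Fin k → ℝ) :
    (Matrix.fromBlocks (Matrix.fromBlocks M M (-N) N)
        (Matrix.of fun i (_ : Fin 1) => Sum.elim (fun s => -a s) (fun s => -b s) i)
        (Matrix.of fun (_ : Fin 1) w => Sum.elim r r w)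
        (1 : Matrix (Fin 1) (Fin 1) ℝ)).det =
      2 ^ k * (M + Matrix.vecMulVec a r).det * N.det := by
  rw [← sub_neg_eq_add M, ← Matrix.neg_vecMulVec, Matrix.vecMulVec_eq (Fin 1)]
  simpa only [fromRows_replicateCol, fromCols_replicateRow, Fintype.card_fin] using!
    bordered_det_plus_general M N (.replicateCol (Fin 1) (-a)) (.replicateCol (Fin 1) (-b))
      (.replicateRow (Fin 1) r)
end

section
/- Let k ≥ 1, let M and N be k×k real matrices, let a, b, r ∈ ℝ^k, and let B be the (2k+1)×(2k+1) bordered block matrix B = [[M, M, −a], [−N, N, −b], [−rᵀ, rᵀ, 1]]. Then det B = 2^k · det(M) · det(N + b·rᵀ), where b·rᵀ is the k×k outer-product matrix with (i,l) entry b_i·r_l. -/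
/-!
Taking the Schur complement of the corner block `1` replaces `M, M, -N, N` by
`M - a rᵀ, M + a rᵀ, -(N + b rᵀ), N + b rᵀ`. Adding the second block column to the first then
clears the lower left block and turns the upper left one into `2 M`, where `a rᵀ` has cancelled.
-/

open Matrix

section

variable {m n R : Type*} [Fintype m] [DecidableEq m] [Fintype n] [DecidableEq n] [CommRing R]

theorem det_fromBlocks_neg_self₂₁ (P Q S : Matrix n n R) :
    (fromBlocks P Q (-S) S).det = (P + Q).det * S.det := by
  have column_add : fromBlocks P Q (-S) S * fromBlocks 1 0 1 1 = fromBlocks (P + Q) Q 0 S := by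
    simp [fromBlocks_multiply]
  calc (fromBlocks P Q (-S) S).det
      = (fromBlocks P Q (-S) S * fromBlocks 1 0 1 1).det := by simp
    _ = (P + Q).det * S.det := by rw [column_add, det_fromBlocks_zero₂₁]

theorem det_bordered_fromBlocks_neg_self₂₁ (P Q S : Matrix n n R) (A B : Matrix n m R)
    (C : Matrix m n R) :
    (fromBlocks (fromBlocks P Q (-S) S) (fromRows (-A) (-B)) (fromCols (-C) C) 1).det =
      (P + Q).det * (S + B * C).det := by
  have schur_complement :
      fromBlocks P Q (-S) S - fromRows (-A) (-B) * fromCols (-C) C =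
        fromBlocks (P - A * C) (Q + A * C) (-(S + B * C)) (S + B * C) := by
    rw [fromRows_mul_fromCols, sub_eq_add_neg, fromBlocks_neg, fromBlocks_add]
    simp only [Matrix.neg_mul, Matrix.mul_neg, neg_neg, neg_add, sub_eq_add_neg]
  rw [det_fromBlocks_one₂₂, schur_complement, det_fromBlocks_neg_self₂₁, sub_add_add_cancel]

theorem bordered_det_minus_general (M N : Matrix n n R) (a b r : n → R) :
    (fromBlocks (fromBlocks M M (-N) N)
        (of fun i (_ : Fin 1) => Sum.elim (fun s => -a s) (fun s => -b s) i)
        (of fun (_ : Fin 1) w => Sum.elim (fun s => -r s) r w)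
        (1 : Matrix (Fin 1) (Fin 1) R)).det =
      2 ^ Fintype.card n * M.det * (N + vecMulVec b r).det := by
  have column_border : (of fun i (_ : Fin 1) => Sum.elim (fun s => -a s) (fun s => -b s) i) =
      fromRows (-replicateCol (Fin 1) a) (-replicateCol (Fin 1) b) := by
    ext (i | i) j <;> rfl
  have row_border : (of fun (_ : Fin 1) w => Sum.elim (fun s => -r s) r w) =
      fromCols (-replicateRow (Fin 1) r) (replicateRow (Fin 1) r) := by
    ext i (j | j) <;> rfl
  have outer_product : replicateCol (Fin 1) b * replicateRow (Fin 1) r = vecMulVec b r :=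
    (vecMulVec_eq (Fin 1) b r).symm
  rw [column_border, row_border, det_bordered_fromBlocks_neg_self₂₁, outer_product,
    ← two_smul R M, det_smul]

end

/-- The bordered (2k+1)×(2k+1) matrix `[[M, M, −a], [−N, N, −b], [−rᵀ, rᵀ, 1]]`
has determinant `2^k · det M · det(N + b·rᵀ)`. -/
theorem bordered_det_minus (k : ℕ) (hk : 1 ≤ k) (M N : Matrix (Fin k) (Fin k) ℝ)
    (a b r : Fin k → ℝ) :
    (Matrix.fromBlocks (Matrix.fromBlocks M M (-N) N)
        (Matrix.of fun i (_ : Fin 1) => Sum.elim (fun s => -a s) (fun s => -b s) i)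
        (Matrix.of fun (_ : Fin 1) w => Sum.elim (fun s => -r s) r w)
        (1 : Matrix (Fin 1) (Fin 1) ℝ)).det =
      2 ^ k * M.det * (N + Matrix.vecMulVec b r).det := by
  simpa only [Fintype.card_fin] using bordered_det_minus_general M N a b r
end

section
/- Let k ≥ 1. Let M₀ be a k×k matrix, c₀, r₀ ∈ ℝ^k, and suppose the (k+1)×(k+1) bordered matrix B₀ = [[M₀, −c₀], [r₀ᵀ, 1]] belongs to M_{k+1}{−1,1} and satisfies |det B₀| = Θ_{k+1}. Let N₀ ∈ M_k{−1,1} satisfy |det N₀| = Θ_k. Then the (2k+1)×(2k+1) matrix D = [[M₀, M₀, −c₀], [−N₀, N₀, −c₀], [r₀ᵀ, r₀ᵀ, 1]] satisfies |det D| = 2^k · Θ_k · Θ_{k+1}. -/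
/-- `Mset k hk` is the set of k×k real matrices with all entries in {−1, 1}
whose first column is all ones. -/
def Mset (k : ℕ) (hk : 0 < k) : Set (Matrix (Fin k) (Fin k) ℝ) :=
  {A | (∀ i j, A i j = 1 ∨ A i j = -1) ∧ ∀ i, A i ⟨0, hk⟩ = 1}

/-- `Theta k hk` is the maximum of `|det A|` over `A ∈ Mset k hk`. -/
noncomputable def Theta (k : ℕ) (hk : 0 < k) : ℝ :=
  sSup ((fun A : Matrix (Fin k) (Fin k) ℝ => |A.det|) '' Mset k hk)

/-!
Subtract the first block column of `D` from the second. As the two agree in the first and last block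
rows, the second becomes `(0, 2N₀, 0)`, and expanding along it leaves `det (2N₀)` times the
determinant of the bordered matrix `B₀`.
-/

section

open Matrix

variable {m n R : Type*}

theorem replicateCol_sumElim {n₁ n₂ : Type*} (v : n₁ → R) (w : n₂ → R) :
    replicateCol m (Sum.elim v w) = fromRows (replicateCol m v) (replicateCol m w) := by
  ext (_ | _) _ <;> rfl

variable [Fintype m] [DecidableEq m] [Fintype n] [DecidableEq n] [CommRing R]

/- `X` plays the role of `D⁻¹ * C` in `Matrix.det_fromBlocks₂₂`. -/
theorem det_fromBlocks_mul₂₁ (A : Matrix m m R) (B : Matrix m n R) (D : Matrix n n R)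
    (X : Matrix n m R) : (fromBlocks A B (D * X) D).det = (A - B * X).det * D.det := by
  have hfactor : fromBlocks A B (D * X) D =
      fromBlocks (A - B * X) B 0 D * fromBlocks 1 0 X 1 := by
    simp [fromBlocks_multiply]
  rw [hfactor, det_mul, det_fromBlocks_zero₂₁, det_fromBlocks_zero₁₂]
  simp

theorem det_fromBlocks_fromRows_fromCols_self (M P N : Matrix n n R) (B B' : Matrix n m R)
    (C : Matrix m n R) (D : Matrix m m R) :
    (fromBlocks (fromBlocks M M P N) (fromRows B B') (fromCols C C) D).det =
      (N - P).det * (fromBlocks M B C D).det := by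
  let e : n ⊕ n ⊕ m ≃ (n ⊕ n) ⊕ m :=
    (Equiv.sumAssoc n n m).symm.trans ((Equiv.sumComm n n).sumCongr (Equiv.refl m))
  have hmove : (fromBlocks (fromBlocks M M P N) (fromRows B B') (fromCols C C) D).submatrix e e =
      fromBlocks N (fromCols P B') (fromRows M C) (fromBlocks M B C D) := by
    ext (_ | _ | _) (_ | _ | _) <;> rfl
  have hcol : fromRows M C = fromBlocks M B C D * (fromRows 1 0 : Matrix (n ⊕ m) n R) := by
    simp [fromBlocks_mul_fromRows]
  rw [← det_submatrix_equiv_self e, hmove, hcol, det_fromBlocks_mul₂₁]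
  simp [fromCols_mul_fromRows]

theorem bordered_det_optimal_general (M N : Matrix n n R) (B B' : Matrix n m R)
    (C : Matrix m n R) (D : Matrix m m R) :
    (fromBlocks (fromBlocks M M (-N) N) (fromRows B B') (fromCols C C) D).det =
      2 ^ Fintype.card n * N.det * (fromBlocks M B C D).det := by
  rw [det_fromBlocks_fromRows_fromCols_self, sub_neg_eq_add, ← two_smul R N, det_smul]

end

/-- If the bordered matrix `B₀ = [[M₀, −c₀], [r₀ᵀ, 1]]` lies in `M_{k+1}{−1,1}`
with `|det B₀| = Θ_{k+1}`, and `N₀ ∈ M_k{−1,1}` with `|det N₀| = Θ_k`, then the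
(2k+1)×(2k+1) matrix `D = [[M₀, M₀, −c₀], [−N₀, N₀, −c₀], [r₀ᵀ, r₀ᵀ, 1]]`
satisfies `|det D| = 2^k · Θ_k · Θ_{k+1}`. -/
theorem bordered_det_optimal (k : ℕ) (hk : 0 < k)
    (M₀ N₀ : Matrix (Fin k) (Fin k) ℝ) (c₀ r₀ : Fin k → ℝ)
    (hB₀mem : Matrix.reindex finSumFinEquiv finSumFinEquiv
        (Matrix.fromBlocks M₀ (Matrix.of fun i (_ : Fin 1) => -c₀ i)
          (Matrix.of fun (_ : Fin 1) s => r₀ s) (1 : Matrix (Fin 1) (Fin 1) ℝ))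
        ∈ Mset (k + 1) k.succ_pos)
    (hB₀det : |(Matrix.fromBlocks M₀ (Matrix.of fun i (_ : Fin 1) => -c₀ i)
        (Matrix.of fun (_ : Fin 1) s => r₀ s) (1 : Matrix (Fin 1) (Fin 1) ℝ)).det|
        = Theta (k + 1) k.succ_pos)
    (hN₀ : N₀ ∈ Mset k hk) (hN₀det : |N₀.det| = Theta k hk) :
    |(Matrix.fromBlocks (Matrix.fromBlocks M₀ M₀ (-N₀) N₀)
        (Matrix.of fun i (_ : Fin 1) => Sum.elim (fun s => -c₀ s) (fun s => -c₀ s) i)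
        (Matrix.of fun (_ : Fin 1) w => Sum.elim r₀ r₀ w)
        (1 : Matrix (Fin 1) (Fin 1) ℝ)).det|
      = 2 ^ k * Theta k hk * Theta (k + 1) k.succ_pos := by
  change |(Matrix.fromBlocks _ (Matrix.replicateCol (Fin 1) (Sum.elim (-c₀) (-c₀)))
    (Matrix.fromCols (Matrix.replicateRow (Fin 1) r₀) (Matrix.replicateRow (Fin 1) r₀)) 1).det| = _
  rw [replicateCol_sumElim, bordered_det_optimal_general, abs_mul, abs_mul, abs_pow, abs_two,
    Fintype.card_fin, hN₀det]
  exact congrArg _ hB₀det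
end

section
/- Let k ≥ 1. The maximum of |det B| over all (2k+1)×(2k+1) matrices of the form B = [[M, M, −a], [−N, N, −b], [ε·rᵀ, rᵀ, 1]], where M, N ∈ M_k{−1,1}, a, b ∈ {−1,1}^k, r ∈ {−1,1}^k with r_1 = 1, and ε ∈ {−1,1}, equals 2^k · Θ_k · Θ_{k+1}; in particular this maximum is attained by some such matrix. -/
/-!
A column operation annihilates one of the two left blocks of the last row of `B`: for `ε = 1`
subtract the first block column from the second, for `ε = -1` add the second to the first. The
result is block triangular and
`det B = 2 ^ k * det N * det [[M, -a], [rᵀ, 1]]` or `det B = 2 ^ k * det M * det [[N, -b], [rᵀ, 1]]`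
respectively. The two factors vary independently, and the bordered factor takes all absolute
values of determinants of matrices in `Mset (k + 1)`: flipping the sign of the last column
makes the lower right entry `1`.
-/

open Matrix

section Determinant

/-- The bordered matrix `[[A, u], [vᵀ, 1]]`. Both `B` itself and the `(k + 1) × (k + 1)` factor of
its determinant have this shape; the bordering index is `Fin 1`, as in the statement for `B`. -/
def bordered {n R : Type*} [Zero R] [One R] (A : Matrix n n R) (u v : n → R) :
    Matrix (n ⊕ Fin 1) (n ⊕ Fin 1) R :=
  fromBlocks A (replicateCol (Fin 1) u) (replicateRow (Fin 1) v) 1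

variable {m n R : Type*} [CommRing R] [Fintype m] [Fintype n] [DecidableEq m] [DecidableEq n]

lemma det_bordered_mul (A E : Matrix n n R) (u v : n → R) :
    (bordered (A * E) u (v ᵥ* E)).det = (bordered A u v).det * E.det := by
  have h : bordered (A * E) u (v ᵥ* E) = bordered A u v * fromBlocks E 0 0 1 := by
    simp [bordered, fromBlocks_multiply, replicateRow_vecMul]
  rw [h, det_mul, det_fromBlocks_zero₂₁, det_one, mul_one]

lemma det_bordered_submatrix_equiv (e : m ≃ n) (A : Matrix n n R) (u v : n → R) :
    (bordered (A.submatrix e e) (u ∘ e) (v ∘ e)).det = (bordered A u v).det := by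
  have h : bordered (A.submatrix e e) (u ∘ e) (v ∘ e) =
      (bordered A u v).submatrix (e.sumCongr (.refl _)) (e.sumCongr (.refl _)) := by
    ext (i | i) (j | j) <;> simp [bordered]
  rw [h, det_submatrix_equiv_self]

lemma det_bordered_fromBlocks_zero₂₁ (A : Matrix m m R) (B : Matrix m n R) (D : Matrix n n R)
    (u : m → R) (w v : n → R) :
    (bordered (fromBlocks A B 0 D) (Sum.elim u w) (Sum.elim 0 v)).det =
      A.det * (bordered D w v).det := by
  have h : bordered (fromBlocks A B 0 D) (Sum.elim u w) (Sum.elim 0 v) =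
      (fromBlocks A (fromCols B (replicateCol (Fin 1) u)) 0 (bordered D w v)).submatrix
        (Equiv.sumAssoc m n (Fin 1)) (Equiv.sumAssoc m n (Fin 1)) := by
    ext ((i | i) | i) ((j | j) | j) <;> simp [bordered]
  rw [h, det_submatrix_equiv_self, det_fromBlocks_zero₂₁]

lemma det_bordered_fromBlocks_zero₁₂ (A : Matrix m m R) (C : Matrix n m R) (D : Matrix n n R)
    (u v : m → R) (w : n → R) :
    (bordered (fromBlocks A 0 C D) (Sum.elim u w) (Sum.elim v 0)).det =
      D.det * (bordered A u v).det := by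
  rw [← det_bordered_submatrix_equiv (Equiv.sumComm n m), ← det_bordered_fromBlocks_zero₂₁ D C A w]
  simp

lemma det_bordered_fromBlocks_sumElim_self (M N : Matrix n n R) (u w v : n → R) :
    (bordered (fromBlocks M M (-N) N) (Sum.elim u w) (Sum.elim v v)).det =
      2 ^ Fintype.card n * N.det * (bordered M u v).det := by
  have hmul : fromBlocks M M (-N) N = fromBlocks M 0 (-N) ((2 : R) • N) * fromBlocks 1 1 0 1 := by
    simp [fromBlocks_multiply, two_smul]
  have hrow : Sum.elim v v = Sum.elim v 0 ᵥ* (fromBlocks 1 1 0 1 : Matrix (n ⊕ n) (n ⊕ n) R) := by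
    simp [vecMul_fromBlocks]
  rw [hmul, hrow, det_bordered_mul, det_bordered_fromBlocks_zero₁₂, det_smul,
    det_fromBlocks_zero₂₁, det_one, mul_one, mul_one]

lemma det_bordered_fromBlocks_sumElim_neg (M N : Matrix n n R) (u w v : n → R) :
    (bordered (fromBlocks M M (-N) N) (Sum.elim u w) (Sum.elim (-v) v)).det =
      2 ^ Fintype.card n * M.det * (bordered N w v).det := by
  have hmul : fromBlocks M M (-N) N =
      fromBlocks ((2 : R) • M) M 0 N * fromBlocks 1 0 (-1) 1 := by
    simp [fromBlocks_multiply, two_smul]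
  have hrow : Sum.elim (-v) v =
      Sum.elim 0 v ᵥ* (fromBlocks 1 0 (-1) 1 : Matrix (n ⊕ n) (n ⊕ n) R) := by
    simp [vecMul_fromBlocks, vecMul_neg]
  rw [hmul, hrow, det_bordered_mul, det_bordered_fromBlocks_zero₂₁, det_smul,
    det_fromBlocks_zero₁₂, det_one, mul_one, mul_one]

lemma det_bordered_toBlocks (A : Matrix (n ⊕ Fin 1) (n ⊕ Fin 1) R) {s : R}
    (hs : s * A (.inr 0) (.inr 0) = 1) :
    (bordered A.toBlocks₁₁ (fun i => s * A (.inl i) (.inr 0)) (fun j => A (.inr 0) (.inl j))).det =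
      s * A.det := by
  have h : bordered A.toBlocks₁₁ (fun i => s * A (.inl i) (.inr 0))
        (fun j => A (.inr 0) (.inl j)) =
      of fun i j => Sum.elim (fun _ => 1) (fun _ => s) j * A i j := by
    ext (i | i) (j | j) <;> simp [bordered, toBlocks₁₁, Fin.fin_one_eq_zero, hs]
  rw [h, det_mul_row]
  simp

end Determinant

/-- The predicate `a ∈ {-1, 1}^ι`. -/
def IsSignVector {ι R : Type*} [One R] [Neg R] (a : ι → R) : Prop := ∀ i, a i = 1 ∨ a i = -1

lemma IsSignVector.neg {ι R : Type*} [One R] [InvolutiveNeg R] {a : ι → R} (ha : IsSignVector a) :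
    IsSignVector (-a) :=
  fun i => (ha i).symm.imp (by simp +contextual) (by simp +contextual)

section Theta

lemma finite_Mset (k : ℕ) (hk : 0 < k) : (Mset k hk).Finite :=
  (Set.Finite.pi' fun _ => Set.Finite.pi' fun _ => Set.toFinite {1, -1}).subset
    fun _ hA => hA.1

lemma isGreatest_Theta (k : ℕ) (hk : 0 < k) :
    IsGreatest ((fun A : Matrix (Fin k) (Fin k) ℝ => |A.det|) '' Mset k hk) (Theta k hk) := by
  have hfin := (finite_Mset k hk).image fun A : Matrix (Fin k) (Fin k) ℝ => |A.det|
  have hne : (Mset k hk).Nonempty := ⟨of fun _ _ => 1, fun _ _ => .inl rfl, fun _ => rfl⟩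
  exact ⟨(hne.image _).csSup_mem hfin, fun _ => le_csSup hfin.bddAbove⟩

lemma abs_det_le_Theta {k : ℕ} {hk : 0 < k} {A : Matrix (Fin k) (Fin k) ℝ} (hA : A ∈ Mset k hk) :
    |A.det| ≤ Theta k hk :=
  (isGreatest_Theta k hk).2 ⟨A, hA, rfl⟩

lemma Theta_nonneg (k : ℕ) (hk : 0 < k) : 0 ≤ Theta k hk := by
  obtain ⟨A, -, hA⟩ := (isGreatest_Theta k hk).1
  exact hA ▸ abs_nonneg A.det

variable {k : ℕ} {hk : 0 < k}

lemma reindex_bordered_mem_Mset {M : Matrix (Fin k) (Fin k) ℝ} (hM : M ∈ Mset k hk)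
    {u v : Fin k → ℝ} (hu : IsSignVector u) (hv : IsSignVector v) (hv0 : v ⟨0, hk⟩ = 1) :
    reindex finSumFinEquiv finSumFinEquiv (bordered M u v) ∈ Mset (k + 1) k.succ_pos := by
  have hsign : ∀ i j, bordered M u v i j = 1 ∨ bordered M u v i j = -1 := by
    rintro (i | i) (j | j)
    · exact hM.1 i j
    · exact hu i
    · exact hv j
    · exact .inl (by simp [bordered, Fin.fin_one_eq_zero])
  have hcol : ∀ i, bordered M u v i (.inl ⟨0, hk⟩) = 1 := by
    rintro (i | _)
    · exact hM.2 i
    · exact hv0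
  have hzero : finSumFinEquiv.symm (⟨0, k.succ_pos⟩ : Fin (k + 1)) = .inl ⟨0, hk⟩ :=
    finSumFinEquiv.symm_apply_apply (.inl ⟨0, hk⟩)
  refine ⟨fun _ _ => hsign _ _, fun _ => ?_⟩
  rw [reindex_apply, submatrix_apply, hzero]
  exact hcol _

lemma abs_det_bordered_le_Theta {M : Matrix (Fin k) (Fin k) ℝ} (hM : M ∈ Mset k hk)
    {u v : Fin k → ℝ} (hu : IsSignVector u) (hv : IsSignVector v) (hv0 : v ⟨0, hk⟩ = 1) :
    |(bordered M u v).det| ≤ Theta (k + 1) k.succ_pos := by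
  simpa using abs_det_le_Theta (reindex_bordered_mem_Mset hM hu hv hv0)

lemma abs_two_pow_mul_det_mul_det_bordered_le {M N : Matrix (Fin k) (Fin k) ℝ}
    (hM : M ∈ Mset k hk) (hN : N ∈ Mset k hk) {u v : Fin k → ℝ} (hu : IsSignVector u)
    (hv : IsSignVector v) (hv0 : v ⟨0, hk⟩ = 1) :
    |2 ^ k * M.det * (bordered N u v).det| ≤ 2 ^ k * Theta k hk * Theta (k + 1) k.succ_pos := by
  have hΘ := Theta_nonneg k hk
  rw [abs_mul, abs_mul, abs_pow, abs_two]
  gcongr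
  · exact abs_det_le_Theta hM
  · exact abs_det_bordered_le_Theta hN hu hv hv0

variable (k hk) in
lemma exists_abs_det_bordered_eq_Theta : ∃ M ∈ Mset k hk, ∃ u v : Fin k → ℝ,
    IsSignVector u ∧ IsSignVector v ∧ v ⟨0, hk⟩ = 1 ∧
      |(bordered M u v).det| = Theta (k + 1) k.succ_pos := by
  obtain ⟨A, ⟨hsign, hcol⟩, hdet⟩ := (isGreatest_Theta (k + 1) k.succ_pos).1
  let A' := A.submatrix finSumFinEquiv finSumFinEquiv
  let s := A' (.inr 0) (.inr 0)
  have hs : s = 1 ∨ s = -1 := hsign _ _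
  refine ⟨A'.toBlocks₁₁, ⟨fun _ _ => hsign _ _, fun _ => hcol _⟩, fun i => s * A' (.inl i) (.inr 0),
    fun j => A' (.inr 0) (.inl j), fun i => ?_, fun _ => hsign _ _, hcol _, ?_⟩
  · have hi : A' (.inl i) (.inr 0) = 1 ∨ A' (.inl i) (.inr 0) = -1 := hsign _ _
    rcases hs with h | h <;> rcases hi with h' | h' <;> simp [h, h']
  · have habs : |s| = 1 := by rcases hs with h | h <;> simp [h]
    rw [det_bordered_toBlocks A' (mul_self_eq_one_iff.2 hs), abs_mul, habs, one_mul,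
      det_submatrix_equiv_self, ← hdet]

end Theta

/-- The maximum of `|det B|` over all bordered (2k+1)×(2k+1) matrices
`B = [[M, M, −a], [−N, N, −b], [ε·rᵀ, rᵀ, 1]]` with `M, N ∈ M_k{−1,1}`,
`a, b, r ∈ {−1,1}^k`, `r 0 = 1` and `ε ∈ {−1,1}`, equals `2^k · Θ_k · Θ_{k+1}`,
and this maximum is attained. -/
theorem bordered_det_isGreatest (k : ℕ) (hk : 0 < k) :
    IsGreatest {x : ℝ | ∃ M ∈ Mset k hk, ∃ N ∈ Mset k hk, ∃ a b r : Fin k → ℝ,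
        (∀ i, a i = 1 ∨ a i = -1) ∧ (∀ i, b i = 1 ∨ b i = -1) ∧
        (∀ i, r i = 1 ∨ r i = -1) ∧ r ⟨0, hk⟩ = 1 ∧
        ∃ ε : ℝ, (ε = 1 ∨ ε = -1) ∧
          x = |(Matrix.fromBlocks (Matrix.fromBlocks M M (-N) N)
            (Matrix.of fun i (_ : Fin 1) =>
              Sum.elim (fun s => -a s) (fun s => -b s) i)
            (Matrix.of fun (_ : Fin 1) w => Sum.elim (fun s => ε * r s) r w)
            (1 : Matrix (Fin 1) (Fin 1) ℝ)).det|}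
      (2 ^ k * Theta k hk * Theta (k + 1) k.succ_pos) := by
  constructor
  · obtain ⟨N, hN, hNdet⟩ := (isGreatest_Theta k hk).1
    obtain ⟨M, hM, u, r, hu, hr, hr0, hdet⟩ := exists_abs_det_bordered_eq_Theta k hk
    refine ⟨M, hM, N, hN, -u, 1, r, hu.neg, fun _ => .inl rfl, hr, hr0, 1, .inl rfl, ?_⟩
    change _ = |(bordered (fromBlocks M M (-N) N) (Sum.elim (- -u) (-1))
      (Sum.elim ((1 : ℝ) • r) r)).det|
    rw [one_smul, neg_neg, det_bordered_fromBlocks_sumElim_self, ← hNdet, ← hdet]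
    simp [abs_mul]
  · rintro _ ⟨M, hM, N, hN, a, b, r, ha, hb, hr, hr0, ε, hε, rfl⟩
    change |(bordered (fromBlocks M M (-N) N) (Sum.elim (-a) (-b)) (Sum.elim (ε • r) r)).det| ≤ _
    rcases hε with rfl | rfl
    · rw [one_smul, det_bordered_fromBlocks_sumElim_self, Fintype.card_fin]
      exact abs_two_pow_mul_det_mul_det_bordered_le hN hM (IsSignVector.neg ha) hr hr0
    · rw [neg_one_smul, det_bordered_fromBlocks_sumElim_neg, Fintype.card_fin]
      exact abs_two_pow_mul_det_mul_det_bordered_le hM hN (IsSignVector.neg hb) hr hr0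
end

section
/- Let k ≥ 1 and let F₁, …, F_k ∈ {−1,1}^{2k} be column vectors. Let D be the 2k×2k real matrix whose columns are F₁, …, F_k followed by F₁⊙F₁, F₁⊙F₂, …, F₁⊙F_k, where ⊙ denotes the entrywise (Schür) product. If D is invertible, then F₁ is balanced, i.e. the number of indices i with F₁(i) = 1 equals k. -/
/-!
Multiplication by `s = F 0` swaps the columns `F c` and `s ⊙ F c`, as `s ⊙ s = 1`. If these columns
form a basis, `diagonal s` is therefore similar to the matrix of a permutation without fixed points,
so its trace vanishes: `s` has as many entries `1` as entries `-1`.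
-/

open Finset Matrix

section Trace

variable {n ι R : Type*} [Fintype n] [DecidableEq n]

theorem trace_eq_of_semiconjBy [CommSemiring R] {D N M : Matrix n n R}
    (h : SemiconjBy D N M) (hD : IsUnit D) : M.trace = N.trace := by
  obtain ⟨u, rfl⟩ := hD
  rw [← trace_units_conj u N, h.eq, Units.mul_inv_cancel_right]

theorem mul_fromCols_mul_of_mul_self_eq_one [Semiring R] {M : Matrix n n R}
    (hM : M * M = 1) (A : Matrix n ι R) :
    M * fromCols A (M * A) = (fromCols A (M * A)).submatrix id Sum.swap := by
  rw [mul_fromCols, ← Matrix.mul_assoc, hM, Matrix.one_mul]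
  ext i (c | c) <;> rfl

theorem trace_eq_zero_of_isUnit_fromCols [CommSemiring R] {M : Matrix n n R}
    (hM : M * M = 1) (A : Matrix n ι R) (e : n ≃ ι ⊕ ι)
    (h : IsUnit ((fromCols A (M * A)).submatrix id e)) : M.trace = 0 := by
  let σ : Equiv.Perm n := e.symm.permCongr (Equiv.sumComm ι ι)
  have hsemi : SemiconjBy ((fromCols A (M * A)).submatrix id e) (σ.permMatrix R) M := by
    calc
      (fromCols A (M * A)).submatrix id e * σ.permMatrix R
          = ((fromCols A (M * A)).submatrix id Sum.swap).submatrix id e := by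
        rw [Equiv.Perm.permMatrix, PEquiv.mul_toMatrix_toPEquiv]
        ext i j
        simp [σ, Equiv.permCongr_def]
      _ = M * (fromCols A (M * A)).submatrix id e := by
        rw [← mul_fromCols_mul_of_mul_self_eq_one hM]
        rfl
  have hσ : Function.fixedPoints σ = ∅ := by
    refine Set.eq_empty_of_forall_notMem fun j hj => ?_
    have hswap : (e j).swap = e j := e.symm_apply_eq.mp hj
    cases hj' : e j <;> simp [hj'] at hswap
  rw [trace_eq_of_semiconjBy hsemi h, trace_permutation, hσ, Set.ncard_empty, Nat.cast_zero]

end Trace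

theorem sum_eq_two_mul_card_filter_eq_one_sub_card {α R : Type*} [NonAssocRing R] [DecidableEq R]
    (t : Finset α) {s : α → R} (hs : ∀ i ∈ t, s i = 1 ∨ s i = -1) :
    ∑ i ∈ t, s i = 2 * (#{i ∈ t | s i = 1} : R) - #t := by
  have hind : ∀ i ∈ t, s i = 2 * (if s i = 1 then 1 else 0) - 1 := by
    intro i hi
    split_ifs with h
    · rw [h, mul_one, ← one_add_one_eq_two, add_sub_cancel_right]
    · rw [(hs i hi).resolve_left h, mul_zero, zero_sub]
  rw [sum_congr rfl hind, sum_sub_distrib, ← mul_sum, sum_boole, sum_const, nsmul_one]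

theorem balanced_of_invertible_general {n ι R : Type*} [Fintype n] [DecidableEq n] [Fintype ι]
    [CommRing R] [CharZero R] [DecidableEq R] (e : n ≃ ι ⊕ ι)
    (s : n → R) (hs : ∀ i, s i = 1 ∨ s i = -1) (F : ι → n → R) (D : Matrix n n R)
    (hD : ∀ i j, D i j = Sum.elim (fun c => F c i) (fun c => s i * F c i) (e j))
    (hinv : IsUnit D) :
    #{i | s i = 1} = Fintype.card ι := by
  have hsq : diagonal s * diagonal s = 1 := by
    rw [diagonal_mul_diagonal, ← diagonal_one]
    congr! 2 with i
    rcases hs i with h | h <;> simp [h]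
  have hcols : D = (fromCols (of F)ᵀ (diagonal s * (of F)ᵀ)).submatrix id e := by
    ext i j
    rw [hD, submatrix_apply]
    cases e j <;> simp
  have hsum : ∑ i, s i = 0 := by
    rw [← trace_diagonal]
    exact trace_eq_zero_of_isUnit_fromCols hsq _ e (hcols ▸ hinv)
  have hcard : Fintype.card n = 2 * Fintype.card ι := by
    rw [Fintype.card_congr e, Fintype.card_sum, two_mul]
  have htwo : 2 * #{i | s i = 1} = Fintype.card n := by
    rw [sum_eq_two_mul_card_filter_eq_one_sub_card univ fun i _ => hs i, sub_eq_zero] at hsum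
    exact_mod_cast hsum
  lia

/-- Let `F 0, …, F (k-1) ∈ {−1,1}^{2k}` and let `D` be the 2k×2k matrix whose
columns are `F 0, …, F (k-1)` followed by the Schür products
`F 0 ⊙ F 0, F 0 ⊙ F 1, …, F 0 ⊙ F (k-1)`. If `D` is invertible then `F 0` is
balanced: exactly `k` of its entries equal 1. -/
theorem balanced_of_invertible (k : ℕ) (hk : 0 < k)
    (F : Fin k → (Fin (2 * k) → ℝ)) (hF : ∀ c i, F c i = 1 ∨ F c i = -1)
    (D : Matrix (Fin (2 * k)) (Fin (2 * k)) ℝ)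
    (hD : ∀ i j, D i j =
      Sum.elim (fun c => F c i) (fun c => F ⟨0, hk⟩ i * F c i)
        (finSumFinEquiv.symm (finCongr (two_mul k) j)))
    (hinv : IsUnit D) :
    (Finset.univ.filter fun i => F ⟨0, hk⟩ i = 1).card = k := by
  simpa using balanced_of_invertible_general ((finCongr (two_mul k)).trans finSumFinEquiv.symm)
    (F ⟨0, hk⟩) (hF ⟨0, hk⟩) F D hD hinv
end
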